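/- arXiv:1210.7110 — 3 statements merged into one kernel-verified Lean document; each statement's English description precedes it below -/
import Mathlib

section
/- Let X, Y be smooth tangent vector fields on U (i.e. η*_p(X(p)) = η*_p(Y(p)) = 0 for all p) such that [X,Y] is also tangent (η*_p([X,Y](p)) = 0 for all p). Then the torsion of the projected covariant derivative satisfies, for all p ∈ U: ∇_X Y(p) − ∇_Y X(p) − [X,Y](p) = A(p)·(f¹_p(X(p))·f²_p(Y(p)) − f¹_p(Y(p))·f²_p(X(p)))·f₂(p); that is, T = A·f¹∧f² ⊗ f₂. -/
open Real MeasureTheory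

noncomputable section

/-- The Heisenberg group `ℍ¹` in exponential coordinates, as `ℝ³`. -/
abbrev H3 : Type := Fin 3 → ℝ

/-- Left invariant vector field `e₀`. -/
def E0 : H3 → H3 := fun _ => ![0, 0, 1]

/-- Left invariant vector field `e₁`. -/
def E1 : H3 → H3 := fun p => ![1, 0, -p 1 / 2]

/-- Left invariant vector field `e₂`. -/
def E2 : H3 → H3 := fun p => ![0, 1, p 0 / 2]

/-- Dual coframe element `e⁰` (the contact form). -/
def e0' (p v : H3) : ℝ := v 2 + (p 1 * v 0 - p 0 * v 1) / 2

/-- Dual coframe element `e¹`. -/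
def e1' (_p v : H3) : ℝ := v 0

/-- Dual coframe element `e²`. -/
def e2' (_p v : H3) : ℝ := v 1

/-- Lie bracket of vector fields on `ℝ³`. -/
def lie (V W : H3 → H3) (p : H3) : H3 :=
  fderiv ℝ W p (V p) - fderiv ℝ V p (W p)

/-- The adapted covariant derivative `∇̄_X Y`, for which the left invariant
frame `e₀, e₁, e₂` is parallel. -/
def nablaBar (X Y : H3 → H3) (p : H3) : H3 :=
  fderiv ℝ (fun q => e0' q (Y q)) p (X p) • E0 p
  + fderiv ℝ (fun q => Y q 0) p (X p) • E1 p
  + fderiv ℝ (fun q => Y q 1) p (X p) • E2 p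

/-- The horizontal normal `η = cos α · e₁ + sin α · e₂`. -/
def eta (α : H3 → ℝ) (p : H3) : H3 := cos (α p) • E1 p + sin (α p) • E2 p

/-- The characteristic field `f₁ = −sin α · e₁ + cos α · e₂`. -/
def F1 (α : H3 → ℝ) (p : H3) : H3 := (-sin (α p)) • E1 p + cos (α p) • E2 p

/-- The field `f₂ = e₀ + A·η`. -/
def F2 (α A : H3 → ℝ) (p : H3) : H3 := E0 p + A p • eta α p

/-- The horizontal conormal `η* = cos α · e¹ + sin α · e² − A·e⁰`. -/
def etaStar (α A : H3 → ℝ) (p v : H3) : ℝ :=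
  cos (α p) * e1' p v + sin (α p) * e2' p v - A p * e0' p v

/-- The 1-form `f¹ = −sin α · e¹ + cos α · e²`. -/
def f1' (α : H3 → ℝ) (p v : H3) : ℝ := -sin (α p) * e1' p v + cos (α p) * e2' p v

/-- The 1-form `f² = e⁰`. -/
def f2' (p v : H3) : ℝ := e0' p v

/-- The projected covariant derivative `∇_X Y = ∇̄_X Y − η*(∇̄_X Y)·η`. -/
def nablaP (α A : H3 → ℝ) (X Y : H3 → H3) (p : H3) : H3 :=
  nablaBar X Y p - etaStar α A p (nablaBar X Y p) • eta α p

/-- The derivative of the contact component of a vector field `Y`, in the direction `v`. -/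
theorem fderiv_e0'_apply {Y : H3 → H3} {p : H3} (hY : DifferentiableAt ℝ Y p) (v : H3) :
    fderiv ℝ (fun q => e0' q (Y q)) p v
      = e0' p (fderiv ℝ Y p v) + (v 1 * Y p 0 - v 0 * Y p 1) / 2 := by
  have hcoord (i : Fin 3) : HasFDerivAt (fun q : H3 => q i)
      (ContinuousLinearMap.proj (R := ℝ) (φ := fun _ : Fin 3 => ℝ) i) p :=
    hasFDerivAt_apply i p
  have hcomp (i : Fin 3) := hasFDerivAt_pi'.1 hY.hasFDerivAt i
  have h := (hcomp 2).add
    ((((hcoord 1).mul (hcomp 0)).sub ((hcoord 0).mul (hcomp 1))).mul_const (2⁻¹ : ℝ))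
  have heq : (fun q => e0' q (Y q))
      = fun q => Y q 2 + (q 1 * Y q 0 - q 0 * Y q 1) * 2⁻¹ := by
    funext q
    simp only [e0', div_eq_mul_inv]
  rw [heq]
  refine (congrArg (fun L => L v) h.fderiv).trans ?_
  simp [e0']
  ring

/-- The derivative of a coordinate of a vector field `Y`, in the direction `v`. -/
theorem fderiv_coord_apply {Y : H3 → H3} {p : H3} (hY : DifferentiableAt ℝ Y p) (v : H3)
    (i : Fin 3) : fderiv ℝ (fun q => Y q i) p v = fderiv ℝ Y p v i :=
  congrArg (fun L => L v) (hasFDerivAt_pi'.1 hY.hasFDerivAt i).fderiv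

/-- The torsion of the adapted covariant derivative is `-(e¹ ∧ e²) ⊗ e₀`. -/
theorem nablaBar_torsion {X Y : H3 → H3} {p : H3} (hX : DifferentiableAt ℝ X p)
    (hY : DifferentiableAt ℝ Y p) :
    nablaBar X Y p - nablaBar Y X p
      = lie X Y p + (X p 1 * Y p 0 - X p 0 * Y p 1) • E0 p := by
  simp only [nablaBar, fderiv_e0'_apply hX, fderiv_e0'_apply hY, fderiv_coord_apply hX,
    fderiv_coord_apply hY]
  ext i
  fin_cases i <;> simp [lie, E0, E1, E2, e0']
  ring

theorem etaStar_add (α A : H3 → ℝ) (p v w : H3) :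
    etaStar α A p (v + w) = etaStar α A p v + etaStar α A p w := by
  simp only [etaStar, e0', e1', e2', Pi.add_apply]
  ring

theorem etaStar_sub (α A : H3 → ℝ) (p v w : H3) :
    etaStar α A p (v - w) = etaStar α A p v - etaStar α A p w := by
  simp only [etaStar, e0', e1', e2', Pi.sub_apply]
  ring

theorem etaStar_smul_E0 (α A : H3 → ℝ) (p : H3) (c : ℝ) :
    etaStar α A p (c • E0 p) = -(c * A p) := by
  simp [etaStar, e0', e1', e2', E0]
  ring

/-- On tangent vectors, `-(e¹ ∧ e²) = A · f¹ ∧ f²`. -/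
theorem wedge_eq_of_etaStar_eq_zero {α A : H3 → ℝ} {p v w : H3}
    (hv : etaStar α A p v = 0) (hw : etaStar α A p w = 0) :
    v 1 * w 0 - v 0 * w 1
      = A p * (f1' α p v * f2' p w - f1' α p w * f2' p v) := by
  simp only [etaStar, e1', e2'] at hv hw
  simp only [f1', f2', e1', e2']
  linear_combination (sin (α p) * w 0 - cos (α p) * w 1) * hv
    - (sin (α p) * v 0 - cos (α p) * v 1) * hw
    + (v 0 * w 1 - v 1 * w 0) * sin_sq_add_cos_sq (α p)

/-- The torsion of the projected covariant derivative on tangent fields is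
`T = A·f¹∧f² ⊗ f₂`. -/
theorem nablaP_torsion (U : Set H3) (hU : IsOpen U) (α A : H3 → ℝ)
    (hα : ContDiffOn ℝ (⊤ : ℕ∞) α U) (hA : ContDiffOn ℝ (⊤ : ℕ∞) A U)
    (X Y : H3 → H3) (hX : ContDiffOn ℝ (⊤ : ℕ∞) X U) (hY : ContDiffOn ℝ (⊤ : ℕ∞) Y U)
    (hXtan : ∀ p ∈ U, etaStar α A p (X p) = 0)
    (hYtan : ∀ p ∈ U, etaStar α A p (Y p) = 0)
    (hbtan : ∀ p ∈ U, etaStar α A p (lie X Y p) = 0) :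
    ∀ p ∈ U,
      nablaP α A X Y p - nablaP α A Y X p - lie X Y p
        = (A p * (f1' α p (X p) * f2' p (Y p) - f1' α p (Y p) * f2' p (X p)))
            • F2 α A p := by
  intro p hp
  have hXd : DifferentiableAt ℝ X p :=
    (hX.contDiffAt (hU.mem_nhds hp)).differentiableAt (by simp)
  have hYd : DifferentiableAt ℝ Y p :=
    (hY.contDiffAt (hU.mem_nhds hp)).differentiableAt (by simp)
  have hbar := nablaBar_torsion hXd hYd
  have hnormal := congrArg (etaStar α A p) hbar
  rw [etaStar_sub, etaStar_add, hbtan p hp, etaStar_smul_E0] at hnormal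
  rw [← wedge_eq_of_etaStar_eq_zero (hXtan p hp) (hYtan p hp)]
  simp only [nablaP, F2]
  linear_combination (norm := module) hbar - hnormal • eta α p
end
end

section
/- The Gaussian curvature defined by the Gauss map coincides with the curvature of the projected covariant derivative: for every p ∈ U, with g(p) = (cos α(p), sin α(p), −A(p)) and the cylinder coframe f̃¹_q(u) = −q₂u₁ + q₁u₂, f̃²_q(u) = u₃ + (1/2)(q₂u₁ − q₁u₂) evaluated at q = g(p), one has f̃¹(Dg_p(f₁(p)))·f̃²(Dg_p(f₂(p))) − f̃¹(Dg_p(f₂(p)))·f̃²(Dg_p(f₁(p))) = f¹_p( ∇_{f₁}(∇_{f₂} f₂)(p) − ∇_{f₂}(∇_{f₁} f₂)(p) − ∇_{[f₁,f₂]} f₂(p) ). -/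
open Real MeasureTheory

noncomputable section

/-- The Gauss map `g(p) = (cos α(p), sin α(p), −A(p))`, with values in the cylinder. -/
def gaussMap (α A : H3 → ℝ) (p : H3) : H3 := ![cos (α p), sin (α p), -A p]

/-- The coframe element `f̃¹_q(u) = −q₂u₁ + q₁u₂` on the cylinder. -/
def ft1 (q u : H3) : ℝ := -q 1 * u 0 + q 0 * u 1

/-- The coframe element `f̃²_q(u) = e⁰_q(u)` on the cylinder. -/
def ft2 (q u : H3) : ℝ := u 2 + (q 1 * u 0 - q 0 * u 1) / 2

lemma differentiable_E1 : Differentiable ℝ E1 := by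
  rw [differentiable_pi]
  intro i
  fin_cases i
  · simp [E1]
  · simp [E1]
  · simp [E1]
    fun_prop

lemma differentiable_E2 : Differentiable ℝ E2 := by
  rw [differentiable_pi]
  intro i
  fin_cases i
  · simp [E2]
  · simp [E2]
  · simp [E2]
    fun_prop

lemma differentiableAt_F1 {α : H3 → ℝ} {p : H3} (hα : DifferentiableAt ℝ α p) :
    DifferentiableAt ℝ (F1 α) p := by
  have h1 := differentiable_E1 p
  have h2 := differentiable_E2 p
  unfold F1
  fun_prop

lemma differentiableAt_F2 {α A : H3 → ℝ} {p : H3} (hα : DifferentiableAt ℝ α p)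
    (hA : DifferentiableAt ℝ A p) : DifferentiableAt ℝ (F2 α A) p := by
  have h1 := differentiable_E1 p
  have h2 := differentiable_E2 p
  unfold F2 eta E0
  fun_prop

/-- `∇̄_X (h f₁)` is the combination of `f₁` and `η` given by the Leibniz rule. -/
lemma nablaBar_smul_F1 {α h : H3 → ℝ} {p : H3} (X : H3 → H3) (hα : DifferentiableAt ℝ α p)
    (hh : DifferentiableAt ℝ h p) :
    nablaBar X (fun q => h q • F1 α q) p
      = fderiv ℝ h p (X p) • F1 α p - (h p * fderiv ℝ α p (X p)) • eta α p := by
  have d0 : (fun q => e0' q (h q • F1 α q)) = fun _ => 0 := by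
    funext q
    simp [e0', F1, E1, E2]
    ring
  have d1 : HasFDerivAt (fun q => (h q • F1 α q) 0)
      (-(h p • (cos (α p) • fderiv ℝ α p) + sin (α p) • fderiv ℝ h p)) p := by
    simpa [F1, E1, E2] using (hh.hasFDerivAt.fun_mul hα.hasFDerivAt.sin).fun_neg
  have d2 : HasFDerivAt (fun q => (h q • F1 α q) 1)
      (h p • ((-sin (α p)) • fderiv ℝ α p) + cos (α p) • fderiv ℝ h p) p := by
    simpa [F1, E1, E2] using hh.hasFDerivAt.fun_mul hα.hasFDerivAt.cos
  ext i
  rw [nablaBar, d0, d1.fderiv, d2.fderiv]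
  simp only [fderiv_fun_const, F1, eta, Pi.add_apply, Pi.sub_apply, Pi.smul_apply, smul_eq_mul,
    add_apply, smul_apply, neg_apply,
    Pi.zero_apply, zero_apply]
  ring

/-- `∇̄_X f₂ = X(A) η + A X(α) f₁`. -/
lemma nablaBar_F2 {α A : H3 → ℝ} {p : H3} (X : H3 → H3) (hα : DifferentiableAt ℝ α p)
    (hA : DifferentiableAt ℝ A p) :
    nablaBar X (F2 α A) p
      = fderiv ℝ A p (X p) • eta α p + (A p * fderiv ℝ α p (X p)) • F1 α p := by
  have d0 : (fun q => e0' q (F2 α A q)) = fun _ => 1 := by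
    funext q
    simp [e0', F2, eta, E0, E1, E2]
    ring
  have d1 : HasFDerivAt (fun q => F2 α A q 0)
      (A p • ((-sin (α p)) • fderiv ℝ α p) + cos (α p) • fderiv ℝ A p) p := by
    simpa [F2, eta, E0, E1, E2] using hA.hasFDerivAt.fun_mul hα.hasFDerivAt.cos
  have d2 : HasFDerivAt (fun q => F2 α A q 1)
      (A p • (cos (α p) • fderiv ℝ α p) + sin (α p) • fderiv ℝ A p) p := by
    simpa [F2, eta, E0, E1, E2] using hA.hasFDerivAt.fun_mul hα.hasFDerivAt.sin
  ext i
  rw [nablaBar, d0, d1.fderiv, d2.fderiv]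
  simp only [fderiv_fun_const, F1, eta, Pi.add_apply, Pi.smul_apply, smul_eq_mul,
    add_apply, smul_apply,
    Pi.zero_apply, zero_apply]
  ring

/-- `η*` annihilates `f₁` and is normalized by `η*(η) = 1`. -/
lemma etaStar_smul_eta_add_smul_F1 (α A : H3 → ℝ) (p : H3) (a b : ℝ) :
    etaStar α A p (a • eta α p + b • F1 α p) = a := by
  simp [etaStar, eta, F1, e0', e1', e2', E1, E2]
  linear_combination a * sin_sq_add_cos_sq (α p)

lemma nablaP_smul_F1 {α h : H3 → ℝ} {p : H3} (A : H3 → ℝ) (X : H3 → H3)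
    (hα : DifferentiableAt ℝ α p) (hh : DifferentiableAt ℝ h p) :
    nablaP α A X (fun q => h q • F1 α q) p = fderiv ℝ h p (X p) • F1 α p := by
  have key : nablaBar X (fun q => h q • F1 α q) p
      = (-(h p * fderiv ℝ α p (X p))) • eta α p + fderiv ℝ h p (X p) • F1 α p := by
    rw [nablaBar_smul_F1 X hα hh]
    module
  rw [nablaP, key, etaStar_smul_eta_add_smul_F1, add_sub_cancel_left]

lemma nablaP_F2 {α A : H3 → ℝ} {p : H3} (X : H3 → H3) (hα : DifferentiableAt ℝ α p)
    (hA : DifferentiableAt ℝ A p) :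
    nablaP α A X (F2 α A) p = (A p * fderiv ℝ α p (X p)) • F1 α p := by
  rw [nablaP, nablaBar_F2 X hα hA, etaStar_smul_eta_add_smul_F1, add_sub_cancel_left]

/-- `∇_X Y` at `p` depends only on the germ of `Y` at `p`. -/
lemma nablaP_congr {Y Z : H3 → H3} {p : H3} (α A : H3 → ℝ) (X : H3 → H3)
    (h : Y =ᶠ[nhds p] Z) : nablaP α A X Y p = nablaP α A X Z p := by
  have hbar : nablaBar X Y p = nablaBar X Z p := by
    unfold nablaBar
    rw [(h.fun_comp (fun v => v 0)).fderiv_eq (f₁ := fun q => Y q 0),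
      (h.fun_comp (fun v => v 1)).fderiv_eq (f₁ := fun q => Y q 1),
      Filter.EventuallyEq.fderiv_eq (h.mono fun q hq => by simp only [hq] :
        (fun q => e0' q (Y q)) =ᶠ[nhds p] fun q => e0' q (Z q))]
    rfl
  rw [nablaP, nablaP, hbar]

lemma f1'_smul_F1_combination (α : H3 → ℝ) (p : H3) (a b c : ℝ) :
    f1' α p (a • F1 α p - b • F1 α p - c • F1 α p) = a - b - c := by
  simp [f1', F1, e1', e2', E1, E2]
  linear_combination (a - b - c) * sin_sq_add_cos_sq (α p)

/-- `[V, W]` acts on a `C²` function as the commutator of `V` and `W`. -/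
lemma fderiv_lie {φ : H3 → ℝ} {V W : H3 → H3} {p : H3} (hφ : ContDiffAt ℝ 2 φ p)
    (hV : DifferentiableAt ℝ V p) (hW : DifferentiableAt ℝ W p) :
    fderiv ℝ φ p (lie V W p) = fderiv ℝ (fun q => fderiv ℝ φ q (W q)) p (V p)
      - fderiv ℝ (fun q => fderiv ℝ φ q (V q)) p (W p) := by
  have hd : DifferentiableAt ℝ (fderiv ℝ φ) p :=
    (hφ.fderiv_right (m := 1) (by norm_num)).differentiableAt (by norm_num)
  have hs : IsSymmSndFDerivAt ℝ φ p := hφ.isSymmSndFDerivAt (by simp)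
  rw [fderiv_clm_apply hd hV, fderiv_clm_apply hd hW]
  simp [lie, hs.eq (V p) (W p)]

lemma fderiv_gaussMap_apply {α A : H3 → ℝ} {p : H3} (v : H3) (hα : DifferentiableAt ℝ α p)
    (hA : DifferentiableAt ℝ A p) :
    fderiv ℝ (gaussMap α A) p v
      = ![-sin (α p) * fderiv ℝ α p v, cos (α p) * fderiv ℝ α p v, -fderiv ℝ A p v] := by
  have d : HasFDerivAt (gaussMap α A)
      (ContinuousLinearMap.pi ![(-sin (α p)) • fderiv ℝ α p, cos (α p) • fderiv ℝ α p,
        -fderiv ℝ A p]) p := by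
    rw [hasFDerivAt_pi']
    intro i
    fin_cases i
    · exact hα.hasFDerivAt.cos
    · exact hα.hasFDerivAt.sin
    · exact hA.hasFDerivAt.neg
  rw [d.fderiv]
  ext i
  fin_cases i <;> simp

lemma ft1_fderiv_gaussMap {α A : H3 → ℝ} {p : H3} (v : H3) (hα : DifferentiableAt ℝ α p)
    (hA : DifferentiableAt ℝ A p) :
    ft1 (gaussMap α A p) (fderiv ℝ (gaussMap α A) p v) = fderiv ℝ α p v := by
  rw [fderiv_gaussMap_apply v hα hA]
  simp [ft1, gaussMap]
  linear_combination fderiv ℝ α p v * sin_sq_add_cos_sq (α p)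

lemma ft2_fderiv_gaussMap {α A : H3 → ℝ} {p : H3} (v : H3) (hα : DifferentiableAt ℝ α p)
    (hA : DifferentiableAt ℝ A p) :
    ft2 (gaussMap α A p) (fderiv ℝ (gaussMap α A) p v)
      = -fderiv ℝ A p v - fderiv ℝ α p v / 2 := by
  rw [fderiv_gaussMap_apply v hα hA]
  simp [ft2, gaussMap]
  linear_combination -(fderiv ℝ α p v / 2) * sin_sq_add_cos_sq (α p)

/-- The Gaussian curvature defined by the Gauss map coincides with the curvature of
the projected covariant derivative:
`(g*(f̃¹∧f̃²))(f₁,f₂) = f¹(R(f₁,f₂)f₂)`. -/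
theorem gaussMap_curvature_eq_nablaP_curvature (U : Set H3) (hU : IsOpen U)
    (α A : H3 → ℝ) (hα : ContDiffOn ℝ (⊤ : ℕ∞) α U) (hA : ContDiffOn ℝ (⊤ : ℕ∞) A U) :
    ∀ p ∈ U,
      ft1 (gaussMap α A p) (fderiv ℝ (gaussMap α A) p (F1 α p))
          * ft2 (gaussMap α A p) (fderiv ℝ (gaussMap α A) p (F2 α A p))
        - ft1 (gaussMap α A p) (fderiv ℝ (gaussMap α A) p (F2 α A p))
          * ft2 (gaussMap α A p) (fderiv ℝ (gaussMap α A) p (F1 α p))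
      = f1' α p
          (nablaP α A (F1 α) (fun q => nablaP α A (F2 α A) (F2 α A) q) p
            - nablaP α A (F2 α A) (fun q => nablaP α A (F1 α) (F2 α A) q) p
            - nablaP α A (lie (F1 α) (F2 α A)) (F2 α A) p) := by
  intro p hp
  have hα2 : ContDiffAt ℝ 2 α p :=
    (contDiffOn_infty.1 hα 2).contDiffAt (hU.mem_nhds hp)
  have dα : ∀ q ∈ U, DifferentiableAt ℝ α q := fun q hq =>
    (hα.contDiffAt (hU.mem_nhds hq)).differentiableAt (by simp)
  have dA : ∀ q ∈ U, DifferentiableAt ℝ A q := fun q hq =>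
    (hA.contDiffAt (hU.mem_nhds hq)).differentiableAt (by simp)
  have dF1 := differentiableAt_F1 (dα p hp)
  have dF2 := differentiableAt_F2 (dα p hp) (dA p hp)
  have hd : DifferentiableAt ℝ (fderiv ℝ α) p :=
    (hα2.fderiv_right (m := 1) (by norm_num)).differentiableAt (by norm_num)
  have nabla_nabla : ∀ X V : H3 → H3, DifferentiableAt ℝ V p →
      nablaP α A X (fun q => nablaP α A V (F2 α A) q) p
        = (A p * fderiv ℝ (fun q => fderiv ℝ α q (V q)) p (X p)
          + fderiv ℝ α p (V p) * fderiv ℝ A p (X p)) • F1 α p := by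
    intro X V hV
    have hαV : DifferentiableAt ℝ (fun q => fderiv ℝ α q (V q)) p := hd.clm_apply hV
    have germ : (fun q => nablaP α A V (F2 α A) q)
        =ᶠ[nhds p] fun q => (A q * fderiv ℝ α q (V q)) • F1 α q := by
      filter_upwards [hU.mem_nhds hp] with q hq
      exact nablaP_F2 V (dα q hq) (dA q hq)
    rw [nablaP_congr α A X germ, nablaP_smul_F1 A X (dα p hp) ((dA p hp).fun_mul hαV),
      fderiv_fun_mul (dA p hp) hαV]
    simp
  rw [nabla_nabla _ _ dF2, nabla_nabla _ _ dF1, nablaP_F2 _ (dα p hp) (dA p hp),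
    f1'_smul_F1_combination, fderiv_lie hα2 dF1 dF2]
  simp only [ft1_fderiv_gaussMap _ (dα p hp) (dA p hp), ft2_fderiv_gaussMap _ (dα p hp) (dA p hp)]
  ring
end
end

section
/- For every smooth vector field X on U and p ∈ U, the adapted covariant derivative of the horizontal conormal is ∇̄_X η*(p) = dα_p(X(p))·f¹_p − dA_p(X(p))·f²_p, so the second fundamental form V(X,Y) := −(∇̄_X η*)(Y) satisfies V(X,Y)(p) = −dα_p(X(p))·f¹_p(Y(p)) + dA_p(X(p))·f²_p(Y(p)); moreover, if Y is tangent (η*_p(Y(p)) = 0 for all p), then ∇̄_X Y = ∇_X Y + V(X,Y)·η on U. -/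
open Real MeasureTheory

noncomputable section

/-- The adapted covariant derivative of a 1-form `θ = c₀e⁰ + c₁e¹ + c₂e²`
along `X`: `∇̄_X θ = X(c₀)e⁰ + X(c₁)e¹ + X(c₂)e²`, with the components
recovered by evaluating `θ` on the frame, `c₀ = θ(e₀)`, `c₁ = θ(e₁)`, `c₂ = θ(e₂)`. -/
def nablaBarForm (X : H3 → H3) (θ : H3 → H3 → ℝ) (p v : H3) : ℝ :=
  fderiv ℝ (fun q => θ q (E0 q)) p (X p) * e0' p v
  + fderiv ℝ (fun q => θ q (E1 q)) p (X p) * e1' p v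
  + fderiv ℝ (fun q => θ q (E2 q)) p (X p) * e2' p v

lemma etaStar_E0 (α A : H3 → ℝ) (q : H3) : etaStar α A q (E0 q) = -A q := by
  simp [etaStar, E0, e0', e1', e2']

lemma etaStar_E1 (α A : H3 → ℝ) (q : H3) : etaStar α A q (E1 q) = cos (α q) := by
  simp [etaStar, E1, e0', e1', e2']
  ring_nf
  simp

lemma etaStar_E2 (α A : H3 → ℝ) (q : H3) : etaStar α A q (E2 q) = sin (α q) := by
  simp [etaStar, E2, e0', e1', e2']
  ring_nf
  simp

/-- `∇̄_X η* = dα(X)·f¹ − dA(X)·f²` at a point of differentiability of `α`. -/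
lemma nablaBarForm_etaStar {α : H3 → ℝ} (A : H3 → ℝ) (X : H3 → H3) {p : H3}
    (hα : DifferentiableAt ℝ α p) (v : H3) :
    nablaBarForm X (etaStar α A) p v
      = fderiv ℝ α p (X p) * f1' α p v - fderiv ℝ A p (X p) * f2' p v := by
  simp only [nablaBarForm, etaStar_E0, etaStar_E1, etaStar_E2, f1', f2', fderiv_fun_neg,
    hα.hasFDerivAt.cos.fderiv, hα.hasFDerivAt.sin.fderiv, neg_apply, smul_apply, smul_eq_mul]
  ring

lemma etaStar_nablaBar (α A : H3 → ℝ) (X Y : H3 → H3) (p : H3) :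
    etaStar α A p (nablaBar X Y p)
      = cos (α p) * fderiv ℝ (fun q => Y q 0) p (X p)
        + sin (α p) * fderiv ℝ (fun q => Y q 1) p (X p)
        - A p * fderiv ℝ (fun q => e0' q (Y q)) p (X p) := by
  simp [etaStar, nablaBar, E0, E1, E2, e0', e1', e2']
  left
  ring

/-- Leibniz rule: `X(η*(Y)) = (∇̄_X η*)(Y) + η*(∇̄_X Y)`. -/
lemma fderiv_etaStar_apply {α A : H3 → ℝ} (X : H3 → H3) {Y : H3 → H3} {p : H3}
    (hα : DifferentiableAt ℝ α p) (hA : DifferentiableAt ℝ A p) (hY : DifferentiableAt ℝ Y p) :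
    fderiv ℝ (fun q => etaStar α A q (Y q)) p (X p)
      = nablaBarForm X (etaStar α A) p (Y p) + etaStar α A p (nablaBar X Y p) := by
  have hY' : ∀ i, DifferentiableAt ℝ (fun q => Y q i) p := differentiableAt_pi.1 hY
  have h0 := hY' 0
  have h1 := hY' 1
  have h2 := hY' 2
  have he : DifferentiableAt ℝ (fun q => e0' q (Y q)) p := by
    unfold e0'
    fun_prop
  have hd := ((hα.hasFDerivAt.cos.fun_mul h0.hasFDerivAt).fun_add
    (hα.hasFDerivAt.sin.fun_mul h1.hasFDerivAt)).fun_sub (hA.hasFDerivAt.fun_mul he.hasFDerivAt)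
  rw [nablaBarForm_etaStar A X hα, etaStar_nablaBar]
  simp only [etaStar, e1', e2', f1', f2', hd.fderiv, add_apply, sub_apply, smul_apply,
    smul_eq_mul]
  ring

/-- `∇̄_X η* = dα(X)·f¹ − dA(X)·f²`; hence the second fundamental form
`V(X,Y) = −(∇̄_X η*)(Y)` is `V(X,Y) = −dα(X)·f¹(Y) + dA(X)·f²(Y)`; moreover
for tangent `Y`, `∇̄_X Y = ∇_X Y + V(X,Y)·η`. -/
theorem nablaBar_etaStar (U : Set H3) (hU : IsOpen U) (α A : H3 → ℝ)
    (hα : ContDiffOn ℝ (⊤ : ℕ∞) α U) (hA : ContDiffOn ℝ (⊤ : ℕ∞) A U)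
    (X Y : H3 → H3) (hX : ContDiffOn ℝ (⊤ : ℕ∞) X U) (hY : ContDiffOn ℝ (⊤ : ℕ∞) Y U) :
    ∀ p ∈ U,
      (∀ v : H3, nablaBarForm X (etaStar α A) p v
          = fderiv ℝ α p (X p) * f1' α p v - fderiv ℝ A p (X p) * f2' p v)
      ∧ (∀ v : H3, -(nablaBarForm X (etaStar α A) p v)
          = -(fderiv ℝ α p (X p)) * f1' α p v + fderiv ℝ A p (X p) * f2' p v)
      ∧ ((∀ q ∈ U, etaStar α A q (Y q) = 0) →
          nablaBar X Y p
            = nablaP α A X Y p + (-(nablaBarForm X (etaStar α A) p (Y p))) • eta α p) := by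
  intro p hp
  have hUp := hU.mem_nhds hp
  have hα' : DifferentiableAt ℝ α p := (hα.contDiffAt hUp).differentiableAt (by simp)
  have hA' : DifferentiableAt ℝ A p := (hA.contDiffAt hUp).differentiableAt (by simp)
  have hY' : DifferentiableAt ℝ Y p := (hY.contDiffAt hUp).differentiableAt (by simp)
  refine ⟨nablaBarForm_etaStar A X hα', fun v => ?_, fun hT => ?_⟩
  · rw [nablaBarForm_etaStar A X hα']
    ring
  · have hzero : (fun q => etaStar α A q (Y q)) =ᶠ[nhds p] fun _ => 0 :=
      Filter.eventually_of_mem hUp hT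
    have hL := fderiv_etaStar_apply X hα' hA' hY'
    rw [hzero.fderiv_eq, fderiv_fun_const, Pi.zero_apply, zero_apply] at hL
    rw [nablaP, neg_eq_of_add_eq_zero_right hL.symm]
    exact (sub_add_cancel _ _).symm
end
end
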